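/- Let F be a number field, R a Dedekind domain with fraction field F, and S a set of real embeddings of F. Set F₊ = {α ∈ F | σ(α) ≥ 0 for all σ ∈ S} and R₊ = R ∩ F₊, a subsemiring of F. For every fractional ideal I of F, the R₊-module I₊ := I ∩ F₊ satisfies: (1) the canonical map R ⊗_{R₊} I₊ → I is an isomorphism; (2) (I₊)^∨ = (I^∨)₊ as submodules of F, where I^∨ = {β ∈ F | βI ⊆ R} and (I₊)^∨ is identified with {β ∈ F | βI₊ ⊆ R₊}; (3) I₊ is a reflexive R₊-module. -/

import Mathlib

/-!
Everything rests on one construction: a nonzero fractional ideal `I` contains an element `p` that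
is strictly positive at every real embedding (`exists_pos_mem`: if `a ∈ I` is nonzero and
`d * a ∈ R` with `d ∈ R` nonzero, take `p = (d * a) ^ 2`). As `F` has only finitely many real
embeddings, `x + n * p` lies in `I₊` for every `x ∈ I` and every large `n : ℕ`, so `I = I₊ - I₊`
(`exists_add_mem_Iplus`).

(1) Applying this to `R` itself, each tensor in `R ⊗ I₊` has the form `1 ⊗ a + (-1) ⊗ b` with
`a, b ∈ I₊`, and such a tensor depends only on `a - b`. This gives injectivity, and `I = I₊ - I₊`
identifies the image.

(2) If `β * I₊ ⊆ R₊`, then `β * I ⊆ R` because `I = I₊ - I₊`, and `β ≥ 0` because `β * p ≥ 0`.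

(3) A linear form `φ` on `I₊` satisfies `φ x * y = φ y * x` (`dual_mul_comm`), so it is
multiplication by an element of `(I₊)^∨ = (I⁻¹)₊`. In the same way a linear form on the dual is
multiplication by some `x ∈ F` with `x * (I⁻¹)₊ ⊆ R₊`; by (2) for `I⁻¹`, such an `x` lies in
`((I⁻¹)⁻¹)₊ = I₊`.
-/

open TensorProduct

/-- The subsemifield `F₊` of elements nonnegative at all real places in `S`. -/
def Fplus (F : Type) [Field F] (S : Set (F →+* ℝ)) : Subsemiring F where
  carrier := {α | ∀ σ ∈ S, 0 ≤ σ α}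
  zero_mem' := fun σ _ => by simp
  one_mem' := fun σ _ => by simp
  add_mem' := fun {a b} ha hb σ hσ => by
    rw [map_add]; exact add_nonneg (ha σ hσ) (hb σ hσ)
  mul_mem' := fun {a b} ha hb σ hσ => by
    rw [map_mul]; exact mul_nonneg (ha σ hσ) (hb σ hσ)

/-- The subsemiring `R₊ = R ∩ F₊`. -/
def Rplus (F : Type) [Field F] (R : Subring F) (S : Set (F →+* ℝ)) : Subsemiring F :=
  R.toSubsemiring ⊓ Fplus F S

variable (F : Type) [Field F] [NumberField F] (R : Subring F)
  [IsDedekindDomain ↥R] [IsFractionRing ↥R F] (S : Set (F →+* ℝ))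

/-- `I₊ = I ∩ F₊` as an `R₊`-submodule of `F`. -/
def Iplus (I : FractionalIdeal (nonZeroDivisors ↥R) F) :
    Submodule ↥(Rplus F R S) F where
  carrier := {x | x ∈ (I : Submodule ↥R F) ∧ ∀ σ ∈ S, 0 ≤ σ x}
  zero_mem' := ⟨Submodule.zero_mem _, fun σ _ => by simp⟩
  add_mem' := fun {a b} ha hb =>
    ⟨Submodule.add_mem _ ha.1 hb.1, fun σ hσ => by
      rw [map_add]; exact add_nonneg (ha.2 σ hσ) (hb.2 σ hσ)⟩
  smul_mem' := fun c {x} hx => by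
    have hcR : (c : F) ∈ R := (Subsemiring.mem_inf.mp c.2).1
    have hcP : ∀ σ ∈ S, 0 ≤ σ (c : F) := (Subsemiring.mem_inf.mp c.2).2
    have hsmul : c • x = (c : F) * x := by
      rw [Subsemiring.smul_def, smul_eq_mul]
    constructor
    · rw [hsmul]
      have h := (I : Submodule ↥R F).smul_mem (⟨(c : F), hcR⟩ : ↥R) hx.1
      rwa [Subring.smul_def, smul_eq_mul] at h
    · intro σ hσ
      rw [hsmul, map_mul]
      exact mul_nonneg (hcP σ hσ) (hx.2 σ hσ)

/-- `R` itself, as an `R₊`-submodule of `F`. -/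
def Rmod : Submodule ↥(Rplus F R S) F where
  carrier := R
  zero_mem' := zero_mem R
  add_mem' := fun ha hb => add_mem ha hb
  smul_mem' := fun c {x} hx => by
    have hcR : (c : F) ∈ R := (Subsemiring.mem_inf.mp c.2).1
    have hsmul : c • x = (c : F) * x := by
      rw [Subsemiring.smul_def, smul_eq_mul]
    rw [hsmul]
    exact mul_mem hcR hx

/-- The multiplication map `(r, x) ↦ r x`, as an `R₊`-bilinear map
`R → I₊ → F`. -/
noncomputable def mulBil (I : FractionalIdeal (nonZeroDivisors ↥R) F) :
    ↥(Rmod F R S) →ₗ[↥(Rplus F R S)] (↥(Iplus F R S I) →ₗ[↥(Rplus F R S)] F) :=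
  LinearMap.mk₂ ↥(Rplus F R S) (fun x y => (x : F) * (y : F))
    (fun x₁ x₂ y => by push_cast; ring)
    (fun c x y => by
      show ((c : F) * (x : F)) * (y : F) = (c : F) * ((x : F) * (y : F)); ring)
    (fun x y₁ y₂ => by push_cast; ring)
    (fun c x y => by
      show (x : F) * ((c : F) * (y : F)) = (c : F) * ((x : F) * (y : F)); ring)

set_option linter.unusedSectionVars false

theorem mul_mem_of_mem_R (I : FractionalIdeal (nonZeroDivisors ↥R) F) {r x : F}
    (hr : r ∈ R) (hx : x ∈ I) : r * x ∈ I :=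
  (I : Submodule ↥R F).smul_mem (⟨r, hr⟩ : ↥R) hx

theorem exists_denom (x : F) : ∃ d : F, d ∈ R ∧ d ≠ 0 ∧ d * x ∈ R := by
  obtain ⟨b, c, hc⟩ := IsLocalization.exists_integer_multiple (nonZeroDivisors ↥R) x
  refine ⟨(b : ↥R), (b : ↥R).2, fun h => nonZeroDivisors.coe_ne_zero b (Subtype.ext h), ?_⟩
  have : (c : F) = ((b : ↥R) : F) * x := hc
  exact this ▸ c.2

/-- A nonzero fractional ideal contains an element positive at every real embedding. -/
theorem exists_pos_mem (I : FractionalIdeal (nonZeroDivisors ↥R) F) (hI : I ≠ 0) :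
    ∃ p : F, p ∈ I ∧ p ≠ 0 ∧ ∀ σ : F →+* ℝ, 0 < σ p := by
  obtain ⟨a, haI, ha⟩ : ∃ a ∈ I, a ≠ 0 := by
    by_contra! h
    exact hI (FractionalIdeal.eq_zero_iff.mpr h)
  obtain ⟨d, hd, hd0, hda⟩ := exists_denom F R a
  have hp : d * a ≠ 0 := mul_ne_zero hd0 ha
  refine ⟨(d * a) ^ 2, ?_, pow_ne_zero 2 hp, fun σ => ?_⟩
  · have := mul_mem_of_mem_R F R I (mul_mem hda hd) haI
    rwa [mul_assoc, ← sq] at this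
  · rw [map_pow]
    have : σ (d * a) ≠ 0 := (map_ne_zero σ).mpr hp
    positivity

theorem finite_realEmbeddings : Finite (F →+* ℝ) :=
  Finite.of_injective (fun σ : F →+* ℝ => Complex.ofRealHom.comp σ) fun _ _ h =>
    RingHom.ext fun x => Complex.ofReal_injective (RingHom.congr_fun h x)

/-- Every `x ∈ I` becomes nonnegative on `S` after adding a natural multiple of a positive
element, so `I = I₊ - I₊`. -/
theorem exists_add_mem_Iplus (I : FractionalIdeal (nonZeroDivisors ↥R) F) (hI : I ≠ 0)
    {x : F} (hx : x ∈ I) : ∃ q ∈ Iplus F R S I, x + q ∈ Iplus F R S I := by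
  obtain ⟨p, hpI, -, hp⟩ := exists_pos_mem F R I hI
  have := finite_realEmbeddings F
  obtain ⟨n, hn⟩ := (Set.finite_range fun σ : F →+* ℝ => ⌈-σ x / σ p⌉₊).bddAbove
  have hnp : (n : F) * p ∈ I := mul_mem_of_mem_R F R I (natCast_mem R n) hpI
  refine ⟨n * p, ⟨hnp, fun σ _ => ?_⟩, ⟨add_mem (S := Submodule ↥R F) hx hnp, fun σ _ => ?_⟩⟩
  · rw [map_mul, map_natCast]
    exact mul_nonneg n.cast_nonneg (hp σ).le
  · have h1 : -σ x / σ p ≤ n := Nat.ceil_le.mp (hn ⟨σ, rfl⟩)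
    rw [div_le_iff₀ (hp σ)] at h1
    rw [map_add, map_mul, map_natCast]
    linarith

theorem exists_add_mem_Rplus {r : F} (hr : r ∈ R) :
    ∃ q ∈ Rplus F R S, r + q ∈ Rplus F R S := by
  have key : ∀ x : F, x ∈ (1 : FractionalIdeal (nonZeroDivisors ↥R) F) ↔ x ∈ R := fun x => by
    rw [FractionalIdeal.mem_one_iff]
    exact ⟨fun ⟨y, hy⟩ => hy ▸ y.2, fun h => ⟨⟨x, h⟩, rfl⟩⟩
  obtain ⟨q, hq, h⟩ := exists_add_mem_Iplus F R S 1 one_ne_zero ((key r).mpr hr)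
  exact ⟨q, ⟨(key q).mp hq.1, hq.2⟩, ⟨(key _).mp h.1, h.2⟩⟩

/-- The equality `(I₊)^∨ = (I⁻¹)₊`, elementwise. -/
theorem forall_mul_mem_Rplus_iff (I : FractionalIdeal (nonZeroDivisors ↥R) F) (hI : I ≠ 0)
    (β : F) : (∀ x ∈ Iplus F R S I, β * x ∈ Rplus F R S) ↔
      (∀ x ∈ I, β * x ∈ R) ∧ ∀ σ ∈ S, 0 ≤ σ β := by
  constructor
  · intro h
    refine ⟨fun x hx => ?_, fun σ hσ => ?_⟩
    · obtain ⟨q, hq, hxq⟩ := exists_add_mem_Iplus F R S I hI hx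
      have := R.sub_mem (h _ hxq).1 (h _ hq).1
      rwa [← mul_sub, add_sub_cancel_right] at this
    · obtain ⟨p, hpI, -, hp⟩ := exists_pos_mem F R I hI
      have := (h p ⟨hpI, fun σ _ => (hp σ).le⟩).2 σ hσ
      rw [map_mul] at this
      exact nonneg_of_mul_nonneg_left this (hp σ)
  · rintro ⟨h1, h2⟩ x hx
    refine ⟨h1 x hx.1, fun σ hσ => ?_⟩
    rw [map_mul]
    exact mul_nonneg (h2 σ hσ) (hx.2 σ hσ)

theorem mem_inv_iff_mul_mem (I : FractionalIdeal (nonZeroDivisors ↥R) F) (hI : I ≠ 0) (β : F) :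
    β ∈ I⁻¹ ↔ ∀ x ∈ I, β * x ∈ R := by
  rw [FractionalIdeal.mem_inv_iff hI]
  refine forall₂_congr fun x _ => ?_
  rw [FractionalIdeal.mem_one_iff]
  exact ⟨fun ⟨y, hy⟩ => hy ▸ y.2, fun h => ⟨⟨_, h⟩, rfl⟩⟩

/-- A linear form on `I₊` is multiplication by a fixed element of `F`. -/
theorem dual_mul_comm (I : FractionalIdeal (nonZeroDivisors ↥R) F)
    (φ : Module.Dual ↥(Rplus F R S) ↥(Iplus F R S I)) (x y : ↥(Iplus F R S I)) :
    (φ x : F) * y = φ y * x := by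
  obtain ⟨d, hd, hd0, hdx⟩ := exists_denom F R (x : F)
  obtain ⟨e, he, he0, hey⟩ := exists_denom F R (y : F)
  have hsq : ∀ c z : F, c ∈ R → c * z ∈ R → (∀ σ ∈ S, 0 ≤ σ z) → c ^ 2 * z ∈ Rplus F R S := by
    intro c z hc hcz hz
    refine ⟨?_, fun σ hσ => ?_⟩
    · have := mul_mem hc hcz
      rwa [← mul_assoc, ← sq] at this
    · rw [map_mul, map_pow]
      exact mul_nonneg (sq_nonneg _) (hz σ hσ)
  -- `d ^ 2 * e ^ 2` clears the denominators of `x` and `y` while staying nonnegative on `S`.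
  have hc : (d * e) ∈ R := mul_mem hd he
  have hx : (d * e) ^ 2 * (x : F) ∈ Rplus F R S :=
    hsq _ _ hc (by rw [mul_right_comm]; exact mul_mem hdx he) x.2.2
  have hy : (d * e) ^ 2 * (y : F) ∈ Rplus F R S :=
    hsq _ _ hc (by rw [mul_assoc]; exact mul_mem hd hey) y.2.2
  have h : (⟨_, hy⟩ : ↥(Rplus F R S)) • x = (⟨_, hx⟩ : ↥(Rplus F R S)) • y :=
    Subtype.ext (show (d * e) ^ 2 * (y : F) * x = (d * e) ^ 2 * (x : F) * y by ring)
  have h2 := congrArg (fun z => ((φ z : ↥(Rplus F R S)) : F)) h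
  simp only [map_smul] at h2
  have h3 : (d * e) ^ 2 * (y : F) * φ x = (d * e) ^ 2 * (x : F) * φ y := h2
  have h0 : (d * e) ^ 2 ≠ 0 := pow_ne_zero 2 (mul_ne_zero hd0 he0)
  apply mul_left_cancel₀ h0
  linear_combination h3

/-- Multiplication by an element of `(I₊)^∨ ⊆ F`, as a linear form on `I₊`. -/
def mulDual (I : FractionalIdeal (nonZeroDivisors ↥R) F) (β : F)
    (hβ : ∀ x ∈ Iplus F R S I, β * x ∈ Rplus F R S) :
    Module.Dual ↥(Rplus F R S) ↥(Iplus F R S I) where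
  toFun x := ⟨β * x, hβ x x.2⟩
  map_add' x y := Subtype.ext (mul_add β (x : F) y)
  map_smul' c x := Subtype.ext (mul_left_comm β (c : F) x)

theorem eval_bijective (I : FractionalIdeal (nonZeroDivisors ↥R) F) (hI : I ≠ 0) :
    Function.Bijective (Module.Dual.eval ↥(Rplus F R S) ↥(Iplus F R S I)) := by
  have hJ : I⁻¹ ≠ 0 := inv_ne_zero hI
  have hdual : ∀ β, β ∈ Iplus F R S I⁻¹ → ∀ x ∈ Iplus F R S I, β * x ∈ Rplus F R S :=
    fun β hβ => (forall_mul_mem_Rplus_iff F R S I hI β).mpr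
      ⟨(mem_inv_iff_mul_mem F R I hI β).mp hβ.1, hβ.2⟩
  obtain ⟨q, hqJ, hq0, hq⟩ := exists_pos_mem F R I⁻¹ hJ
  have hqd := hdual q ⟨hqJ, fun σ _ => (hq σ).le⟩
  constructor
  · intro x y hxy
    have h : mulDual F R S I q hqd x = mulDual F R S I q hqd y := LinearMap.congr_fun hxy (mulDual F R S I q hqd)
    have h' : q * (x : F) = q * y := congrArg Subtype.val h
    exact Subtype.ext (mul_left_cancel₀ hq0 h')
  · intro Ψ
    obtain ⟨p, hpI, hp0, hp⟩ := exists_pos_mem F R I hI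
    let P : ↥(Iplus F R S I) := ⟨p, hpI, fun σ _ => (hp σ).le⟩
    let φq := mulDual F R S I q hqd
    have hΨ : ∀ φ, (Ψ φ : F) * p = φ P * (Ψ φq / q) := by
      intro φ
      have h : φq P • φ = φ P • φq := LinearMap.ext fun x => Subtype.ext <| by
        show q * p * (φ x : F) = φ P * (q * x)
        have : (φ x : F) * p = φ P * x := dual_mul_comm F R S I φ x P
        linear_combination q * this
      have h2 := congrArg (fun z => ((Ψ z : ↥(Rplus F R S)) : F)) h
      simp only [map_smul] at h2
      have h3 : q * p * (Ψ φ : F) = φ P * Ψ φq := h2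
      field_simp
      linear_combination h3
    have hx : Ψ φq / q ∈ Iplus F R S I := by
      have h : ∀ β ∈ Iplus F R S I⁻¹, (Ψ φq / q : F) * β ∈ Rplus F R S := by
        intro β hβ
        have h1 : (Ψ (mulDual F R S I β (hdual β hβ)) : F) * p = β * p * (Ψ φq / q) := hΨ _
        have h2 : (Ψ φq / q : F) * β = Ψ (mulDual F R S I β (hdual β hβ)) :=
          mul_right_cancel₀ hp0 (by linear_combination -h1)
        rw [h2]
        exact Subtype.property _
      obtain ⟨h1, h2⟩ := (forall_mul_mem_Rplus_iff F R S I⁻¹ hJ _).mp h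
      rw [← mem_inv_iff_mul_mem F R _ hJ, inv_inv] at h1
      exact ⟨h1, h2⟩
    refine ⟨⟨_, hx⟩, LinearMap.ext fun φ => Subtype.ext ?_⟩
    show (φ ⟨_, hx⟩ : F) = Ψ φ
    have h1 : (φ ⟨_, hx⟩ : F) * p = φ P * (Ψ φq / q) := dual_mul_comm F R S I φ ⟨_, hx⟩ P
    exact mul_right_cancel₀ hp0 (h1.trans (hΨ φ).symm)

/-- The element `1` of `R`, seen in the `R₊`-module `Rmod`. -/
def oneR : ↥(Rmod F R S) := ⟨1, one_mem R⟩

/-- The element `-1` of `R`, seen in the `R₊`-module `Rmod`. -/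
def negOneR : ↥(Rmod F R S) := ⟨-1, R.neg_mem (one_mem R)⟩

theorem one_tmul_add_neg_one_tmul (I : FractionalIdeal (nonZeroDivisors ↥R) F)
    (b : ↥(Iplus F R S I)) :
    oneR F R S ⊗ₜ[↥(Rplus F R S)] b + negOneR F R S ⊗ₜ[↥(Rplus F R S)] b = 0 := by
  rw [← TensorProduct.add_tmul]
  have : oneR F R S + negOneR F R S = 0 := Subtype.ext (add_neg_cancel (1 : F))
  rw [this, TensorProduct.zero_tmul]

/-- Every tensor is `1 ⊗ a - 1 ⊗ b`, because `R = R₊ - R₊`. -/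
theorem exists_eq_tmul_add (I : FractionalIdeal (nonZeroDivisors ↥R) F)
    (t : ↥(Rmod F R S) ⊗[↥(Rplus F R S)] ↥(Iplus F R S I)) :
    ∃ a b : ↥(Iplus F R S I), t = oneR F R S ⊗ₜ a + negOneR F R S ⊗ₜ b := by
  induction t with
  | zero => exact ⟨0, 0, by simp⟩
  | tmul r x =>
    obtain ⟨q, hq, hrq⟩ := exists_add_mem_Rplus F R S (r := (r : F)) r.2
    refine ⟨(⟨_, hrq⟩ : ↥(Rplus F R S)) • x, (⟨_, hq⟩ : ↥(Rplus F R S)) • x, ?_⟩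
    rw [← TensorProduct.smul_tmul, ← TensorProduct.smul_tmul, ← TensorProduct.add_tmul]
    congr 1
    exact Subtype.ext (show (r : F) = (r + q) * 1 + q * (-1) by ring)
  | add t u ht hu =>
    obtain ⟨a, b, rfl⟩ := ht
    obtain ⟨c, d, rfl⟩ := hu
    refine ⟨a + c, b + d, ?_⟩
    rw [TensorProduct.tmul_add, TensorProduct.tmul_add]
    abel

theorem lift_mulBil_injective (I : FractionalIdeal (nonZeroDivisors ↥R) F) :
    Function.Injective (TensorProduct.lift (mulBil F R S I)) := by
  intro t u htu
  obtain ⟨a, b, rfl⟩ := exists_eq_tmul_add F R S I t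
  obtain ⟨c, d, rfl⟩ := exists_eq_tmul_add F R S I u
  rw [map_add, map_add, TensorProduct.lift.tmul, TensorProduct.lift.tmul,
    TensorProduct.lift.tmul, TensorProduct.lift.tmul] at htu
  have h : (1 : F) * a + (-1) * b = 1 * c + (-1) * d := htu
  have had : a + d = c + b := Subtype.ext (show (a : F) + d = c + b by linear_combination h)
  have hz := one_tmul_add_neg_one_tmul F R S I
  have htmul := congrArg (fun z => oneR F R S ⊗ₜ[↥(Rplus F R S)] z) had
  simp only [TensorProduct.tmul_add] at htmul
  -- The tensor product carries only a commutative monoid structure here, so the cancellation is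
  -- done by adding `1 ⊗ d + (-1) ⊗ d = 0` and `1 ⊗ b + (-1) ⊗ b = 0`.
  calc oneR F R S ⊗ₜ[↥(Rplus F R S)] a + negOneR F R S ⊗ₜ b
      = (oneR F R S ⊗ₜ a + negOneR F R S ⊗ₜ b) + (oneR F R S ⊗ₜ d + negOneR F R S ⊗ₜ d) := by
        rw [hz d, add_zero]
    _ = (oneR F R S ⊗ₜ a + oneR F R S ⊗ₜ d) + (negOneR F R S ⊗ₜ b + negOneR F R S ⊗ₜ d) := by
        abel
    _ = (oneR F R S ⊗ₜ c + negOneR F R S ⊗ₜ d) + (oneR F R S ⊗ₜ b + negOneR F R S ⊗ₜ b) := by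
        rw [htmul]; abel
    _ = oneR F R S ⊗ₜ c + negOneR F R S ⊗ₜ d := by rw [hz b, add_zero]

theorem range_lift_mulBil (I : FractionalIdeal (nonZeroDivisors ↥R) F) (hI : I ≠ 0) :
    (LinearMap.range (TensorProduct.lift (mulBil F R S I)) : Set F) =
      ((I : Submodule ↥R F) : Set F) := by
  ext x
  constructor
  · rintro ⟨t, rfl⟩
    obtain ⟨a, b, rfl⟩ := exists_eq_tmul_add F R S I t
    rw [map_add, TensorProduct.lift.tmul, TensorProduct.lift.tmul]
    exact add_mem (S := Submodule ↥R F) (mul_mem_of_mem_R F R I (one_mem R) a.2.1)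
      (mul_mem_of_mem_R F R I (neg_mem (one_mem R)) b.2.1)
  · intro hx
    obtain ⟨q, hq, hxq⟩ := exists_add_mem_Iplus F R S I hI hx
    refine ⟨oneR F R S ⊗ₜ ⟨_, hxq⟩ + negOneR F R S ⊗ₜ ⟨_, hq⟩, ?_⟩
    rw [map_add, TensorProduct.lift.tmul, TensorProduct.lift.tmul]
    show (1 : F) * (x + q) + (-1) * q = x
    ring

/-- Properties of `I₊ = I ∩ F₊` for a fractional ideal `I`:
(1) the canonical map `R ⊗[R₊] I₊ → I` (induced by multiplication in `F`) is an
    isomorphism, i.e. the multiplication map `R ⊗[R₊] I₊ → F` is injective with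
    image exactly `I`;
(2) `(I₊)^∨ = (I^∨)₊` as subsets of `F`;
(3) `I₊` is a reflexive `R₊`-module: the canonical evaluation map from `I₊` to its
    double dual is an isomorphism. -/
theorem Iplus_reflexive_properties (I : FractionalIdeal (nonZeroDivisors ↥R) F)
    (hI : I ≠ 0) :
    (Function.Injective (TensorProduct.lift (mulBil F R S I)) ∧
      (LinearMap.range (TensorProduct.lift (mulBil F R S I)) : Set F) =
        ((I : Submodule ↥R F) : Set F)) ∧
    ({β : F | ∀ x ∈ Iplus F R S I, β * x ∈ Rplus F R S} =
      {β : F | (∀ x ∈ (I : Submodule ↥R F), β * x ∈ R) ∧ ∀ σ ∈ S, 0 ≤ σ β}) ∧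
    Function.Bijective (Module.Dual.eval ↥(Rplus F R S) ↥(Iplus F R S I)) := by
  exact ⟨⟨lift_mulBil_injective F R S I, range_lift_mulBil F R S I hI⟩,
    Set.ext (forall_mul_mem_Rplus_iff F R S I hI), eval_bijective F R S I hI⟩
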